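/- arXiv:2506.19003 — 3 statements merged into one kernel-verified Lean document; each statement's English description precedes it below -/
import Mathlib

section
/- (Theorem 1, ODE form: squeezing bound at fixed winding number.) For the phase-space ODE system with admissible control (0 ≤ ε(t) ≤ ω), suppose x(0) = y(0) = 0 and let T ≥ 0, n ∈ ℕ. Suppose there is a partition 0 = s₀ ≤ s₁ ≤ … ≤ s_{2m} = T with m ≤ n + 1 such that for each i, y(t) ≥ 0 for all t ∈ [s_{2i}, s_{2i+1}] and y(t) ≤ 0 for all t ∈ [s_{2i+1}, s_{2i+2}] (the trajectory makes at most n+1 excursions into the upper half-plane, i.e., its winding number is at most n). Then √(1 + x(T)² + y(T)²) ≤ (ω²T²/(n+1) + 1)^{n+1}; in particular the squeezing parameter satisfies sinh(2r(T)) ≤ (ω²T²/(n+1) + 1)^{n+1}. -/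
/-!
Write `z = √(1 + x² + y²) = cosh 2r`, so that `z' = ε y`: squeezing grows only in the upper
half-plane. There `(z + x)' = 2 (ε - ω) y ≤ 0`, hence `y' = 2 ω x + ε (z - x) ≤ ω (z + x)` stays
below a constant, `y` grows at most linearly in time and `z` at most quadratically. One upper arc
of duration `τ` thus multiplies `z` by at most `1 + ω² τ²`. Since the sum of the `τᵢ²` is at most
`T²`, the product of these factors is bounded by the inequality of arithmetic and geometric means.
-/

open Finset

lemma prod_one_add_le_pow_of_card_le {ι : Type*} {s : Finset ι} {u : ι → ℝ} {N : ℕ}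
    (hu : ∀ i ∈ s, 0 ≤ u i) (hs : #s ≤ N) :
    ∏ i ∈ s, (1 + u i) ≤ ((∑ i ∈ s, u i) / N + 1) ^ N := by
  obtain rfl | hN := N.eq_zero_or_pos
  · simp [card_eq_zero.mp (Nat.le_zero.mp hs)]
  set c := (∑ i ∈ s, u i) / N + 1 with hc
  have hc_ge : 1 ≤ c := le_add_of_nonneg_left (div_nonneg (sum_nonneg hu) N.cast_nonneg)
  have hc_pos : 0 < c := one_pos.trans_le hc_ge
  have hu_pos : ∀ i ∈ s, 0 < 1 + u i := fun i hi ↦ add_pos_of_pos_of_nonneg one_pos (hu i hi)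
  -- By concavity, `log` lies below its tangent line at `c`.
  have log_le (i) (hi : i ∈ s) : Real.log (1 + u i) ≤ Real.log c + ((1 + u i) / c - 1) := by
    have := Real.log_le_sub_one_of_pos (div_pos (hu_pos i hi) hc_pos)
    rw [Real.log_div (hu_pos i hi).ne' hc_pos.ne'] at this
    linarith
  have hsum : ∑ i ∈ s, u i = N * (c - 1) := by rw [hc]; field_simp; ring
  rw [← Real.log_le_log_iff (prod_pos hu_pos) (by positivity),
    Real.log_prod fun i hi ↦ (hu_pos i hi).ne', Real.log_pow]
  calc ∑ i ∈ s, Real.log (1 + u i)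
      ≤ ∑ i ∈ s, (Real.log c + ((1 + u i) / c - 1)) := sum_le_sum log_le
    _ = #s * Real.log c + (N - #s) * (1 - c⁻¹) := by
        simp only [sum_add_distrib, sum_sub_distrib, ← sum_div, sum_const, nsmul_eq_mul, hsum]
        field_simp
        ring
    _ ≤ #s * Real.log c + (N - #s) * Real.log c := by
        gcongr
        · exact sub_nonneg.mpr (mod_cast hs)
        · exact Real.one_sub_inv_le_log_of_pos hc_pos
    _ = N * Real.log c := by ring

lemma le_mul_prod_of_succ_le_mul {R : Type*} [CommSemiring R] [PartialOrder R] [IsOrderedRing R]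
    {z g : ℕ → R} {m : ℕ} (hg : ∀ i < m, 0 ≤ g i) (hz : ∀ i < m, z (i + 1) ≤ z i * g i) :
    z m ≤ z 0 * ∏ i ∈ range m, g i := by
  induction m with
  | zero => simp
  | succ m ih =>
    calc z (m + 1) ≤ z m * g m := hz m m.lt_succ_self
      _ ≤ (z 0 * ∏ i ∈ range m, g i) * g m :=
        mul_le_mul_of_nonneg_right
          (ih (fun i hi ↦ hg i (hi.trans m.lt_succ_self)) fun i hi ↦ hz i (hi.trans m.lt_succ_self))
          (hg m m.lt_succ_self)
      _ = z 0 * ∏ i ∈ range (m + 1), g i := by rw [prod_range_succ, mul_assoc]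

lemma sum_sq_even_gaps_le {s : ℕ → ℝ} {m : ℕ} (hs : MonotoneOn s (Set.Iic (2 * m))) :
    ∑ i ∈ range m, (s (2 * i + 1) - s (2 * i)) ^ 2 ≤ (s (2 * m) - s 0) ^ 2 := by
  have mono {j k : ℕ} (hjk : j ≤ k) (hk : k ≤ 2 * m) : s j ≤ s k := hs (hjk.trans hk) hk hjk
  have gap_nonneg (i) (hi : i ∈ range m) : 0 ≤ s (2 * i + 1) - s (2 * i) :=
    sub_nonneg.mpr (mono (by lia) (by grind))
  have sum_le : ∑ i ∈ range m, (s (2 * i + 1) - s (2 * i)) ≤ s (2 * m) - s 0 :=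
    calc ∑ i ∈ range m, (s (2 * i + 1) - s (2 * i))
        ≤ ∑ i ∈ range m, (s (2 * (i + 1)) - s (2 * i)) :=
          sum_le_sum fun i hi ↦ sub_le_sub_right (mono (by lia) (by grind)) _
      _ = s (2 * m) - s 0 := sum_range_sub (fun i ↦ s (2 * i)) m
  calc ∑ i ∈ range m, (s (2 * i + 1) - s (2 * i)) ^ 2
      ≤ (∑ i ∈ range m, (s (2 * i + 1) - s (2 * i))) ^ 2 := sum_sq_le_sq_sum_of_nonneg gap_nonneg
    _ ≤ (s (2 * m) - s 0) ^ 2 := by gcongr; exact sum_nonneg gap_nonneg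

/-- The value of `cosh 2r` at the phase-space point `(u, v) = (sinh 2r cos φ, sinh 2r sin φ)`. -/
noncomputable def coshTwoR (u v : ℝ) : ℝ := √(1 + u ^ 2 + v ^ 2)

lemma coshTwoR_pos (u v : ℝ) : 0 < coshTwoR u v := Real.sqrt_pos.mpr (by positivity)

lemma le_coshTwoR (u v : ℝ) : u ≤ coshTwoR u v :=
  Real.le_sqrt_of_sq_le (by linarith [sq_nonneg v])

lemma continuous_coshTwoR : Continuous fun p : ℝ × ℝ ↦ coshTwoR p.1 p.2 := by
  unfold coshTwoR
  fun_prop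

lemma hasDerivWithinAt_coshTwoR {x y : ℝ → ℝ} {x' y' t : ℝ} {S : Set ℝ}
    (hx : HasDerivWithinAt x x' S t) (hy : HasDerivWithinAt y y' S t) :
    HasDerivWithinAt (fun τ ↦ coshTwoR (x τ) (y τ))
      ((x t * x' + y t * y') / coshTwoR (x t) (y t)) S t := by
  refine ((((hx.pow 2).const_add 1).add (hy.pow 2)).sqrt
    (show 1 + x t ^ 2 + y t ^ 2 ≠ 0 by positivity)).congr_deriv ?_
  change _ / (2 * coshTwoR (x t) (y t)) = _
  have := (coshTwoR_pos (x t) (y t)).ne'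
  field_simp
  push_cast
  ring

/-- On `[a, b]`, the phase-space trajectory `(x, y)` of the squeezed vacuum is driven by a control
`ε` with values in `[0, ω]`. Only right derivatives are prescribed, so that controls with jumps
(bang-bang protocols) are covered. -/
structure IsSqueezingTrajectory (ω : ℝ) (ε x y : ℝ → ℝ) (a b : ℝ) : Prop where
  control_nonneg : ∀ t ∈ Set.Ico a b, 0 ≤ ε t
  control_le : ∀ t ∈ Set.Ico a b, ε t ≤ ω
  continuousOn_fst : ContinuousOn x (Set.Icc a b)
  continuousOn_snd : ContinuousOn y (Set.Icc a b)
  hasDerivWithinAt_fst : ∀ t ∈ Set.Ico a b,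
    HasDerivWithinAt x (-(2 * ω - ε t) * y t) (Set.Ici t) t
  hasDerivWithinAt_snd : ∀ t ∈ Set.Ico a b,
    HasDerivWithinAt y ((2 * ω - ε t) * x t + ε t * coshTwoR (x t) (y t)) (Set.Ici t) t

namespace IsSqueezingTrajectory

variable {ω : ℝ} {ε x y : ℝ → ℝ} {a b : ℝ}

lemma of_hasDerivAt (hε : ∀ t, 0 ≤ ε t ∧ ε t ≤ ω)
    (hx : ∀ t, HasDerivAt x (-(2 * ω - ε t) * y t) t)
    (hy : ∀ t, HasDerivAt y ((2 * ω - ε t) * x t + ε t * coshTwoR (x t) (y t)) t) :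
    IsSqueezingTrajectory ω ε x y a b where
  control_nonneg t _ := (hε t).1
  control_le t _ := (hε t).2
  continuousOn_fst t _ := (hx t).continuousAt.continuousWithinAt
  continuousOn_snd t _ := (hy t).continuousAt.continuousWithinAt
  hasDerivWithinAt_fst t _ := (hx t).hasDerivWithinAt
  hasDerivWithinAt_snd t _ := (hy t).hasDerivWithinAt

lemma mono (h : IsSqueezingTrajectory ω ε x y a b) {a' b' : ℝ} (ha : a ≤ a') (hb : b' ≤ b) :
    IsSqueezingTrajectory ω ε x y a' b' where
  control_nonneg t ht := h.control_nonneg t (Set.Ico_subset_Ico ha hb ht)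
  control_le t ht := h.control_le t (Set.Ico_subset_Ico ha hb ht)
  continuousOn_fst := h.continuousOn_fst.mono (Set.Icc_subset_Icc ha hb)
  continuousOn_snd := h.continuousOn_snd.mono (Set.Icc_subset_Icc ha hb)
  hasDerivWithinAt_fst t ht := h.hasDerivWithinAt_fst t (Set.Ico_subset_Ico ha hb ht)
  hasDerivWithinAt_snd t ht := h.hasDerivWithinAt_snd t (Set.Ico_subset_Ico ha hb ht)

lemma continuousOn_coshTwoR (h : IsSqueezingTrajectory ω ε x y a b) :
    ContinuousOn (fun t ↦ coshTwoR (x t) (y t)) (Set.Icc a b) :=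
  continuous_coshTwoR.comp_continuousOn (h.continuousOn_fst.prodMk h.continuousOn_snd)

lemma hasDerivWithinAt_coshTwoR (h : IsSqueezingTrajectory ω ε x y a b) {t : ℝ}
    (ht : t ∈ Set.Ico a b) :
    HasDerivWithinAt (fun τ ↦ coshTwoR (x τ) (y τ)) (ε t * y t) (Set.Ici t) t := by
  refine (_root_.hasDerivWithinAt_coshTwoR (h.hasDerivWithinAt_fst t ht)
    (h.hasDerivWithinAt_snd t ht)).congr_deriv ?_
  have := (coshTwoR_pos (x t) (y t)).ne'
  field_simp
  ring

lemma coshTwoR_le_of_nonpos (h : IsSqueezingTrajectory ω ε x y a b) (hab : a ≤ b)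
    (hy : ∀ t ∈ Set.Icc a b, y t ≤ 0) : coshTwoR (x b) (y b) ≤ coshTwoR (x a) (y a) :=
  image_le_of_deriv_right_le_deriv_boundary h.continuousOn_coshTwoR
    (fun _ ↦ h.hasDerivWithinAt_coshTwoR) le_rfl continuousOn_const
    (fun t _ ↦ hasDerivWithinAt_const t _ (coshTwoR (x a) (y a)))
    (fun t ht ↦ mul_nonpos_of_nonneg_of_nonpos (h.control_nonneg t ht)
      (hy t (Set.Ico_subset_Icc_self ht)))
    (Set.right_mem_Icc.mpr hab)

lemma coshTwoR_add_fst_le (h : IsSqueezingTrajectory ω ε x y a b)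
    (hy : ∀ t ∈ Set.Icc a b, 0 ≤ y t) {t : ℝ} (ht : t ∈ Set.Icc a b) :
    coshTwoR (x t) (y t) + x t ≤ coshTwoR (x a) (y a) + x a := by
  refine image_le_of_deriv_right_le_deriv_boundary
    (h.continuousOn_coshTwoR.add h.continuousOn_fst)
    (fun t ht ↦ (h.hasDerivWithinAt_coshTwoR ht).add (h.hasDerivWithinAt_fst t ht))
    (B := fun _ ↦ coshTwoR (x a) (y a) + x a) le_rfl continuousOn_const
    (fun t _ ↦ hasDerivWithinAt_const t _ _) (fun t ht ↦ ?_) ht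
  calc ε t * y t + -(2 * ω - ε t) * y t = -(2 * ((ω - ε t) * y t)) := by ring
    _ ≤ 0 := neg_nonpos.mpr (mul_nonneg zero_le_two (mul_nonneg
        (sub_nonneg.mpr (h.control_le t ht)) (hy t (Set.Ico_subset_Icc_self ht))))

lemma snd_le_of_nonneg (h : IsSqueezingTrajectory ω ε x y a b) (hya : y a ≤ 0)
    (hy : ∀ t ∈ Set.Icc a b, 0 ≤ y t) {t : ℝ} (ht : t ∈ Set.Icc a b) :
    y t ≤ ω * (coshTwoR (x a) (y a) + x a) * (t - a) := by
  set k := ω * (coshTwoR (x a) (y a) + x a)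
  have hasDerivAt_line (t : ℝ) : HasDerivAt (fun t ↦ k * (t - a)) k t := by
    simpa using ((hasDerivAt_id t).sub_const a).const_mul k
  refine image_le_of_deriv_right_le_deriv_boundary h.continuousOn_snd h.hasDerivWithinAt_snd
    (B := fun t ↦ k * (t - a)) (by simpa using hya) (by fun_prop)
    (fun t _ ↦ (hasDerivAt_line t).hasDerivWithinAt) (fun t ht ↦ ?_) ht
  have hω : 0 ≤ ω := (h.control_nonneg t ht).trans (h.control_le t ht)
  calc (2 * ω - ε t) * x t + ε t * coshTwoR (x t) (y t)
      = 2 * ω * x t + ε t * (coshTwoR (x t) (y t) - x t) := by ring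
    _ ≤ 2 * ω * x t + ω * (coshTwoR (x t) (y t) - x t) := by
        gcongr
        · exact sub_nonneg.mpr (le_coshTwoR _ _)
        · exact h.control_le t ht
    _ = ω * (coshTwoR (x t) (y t) + x t) := by ring
    _ ≤ k := mul_le_mul_of_nonneg_left
        (h.coshTwoR_add_fst_le hy (Set.Ico_subset_Icc_self ht)) hω

lemma coshTwoR_le_add_sq (h : IsSqueezingTrajectory ω ε x y a b) (hab : a ≤ b) (hya : y a ≤ 0)
    (hy : ∀ t ∈ Set.Icc a b, 0 ≤ y t) :
    coshTwoR (x b) (y b) ≤ coshTwoR (x a) (y a) +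
      ω ^ 2 * (coshTwoR (x a) (y a) + x a) / 2 * (b - a) ^ 2 := by
  set k := ω ^ 2 * (coshTwoR (x a) (y a) + x a) / 2 with hk
  have hasDerivAt_parabola (t : ℝ) :
      HasDerivAt (fun t ↦ coshTwoR (x a) (y a) + k * (t - a) ^ 2) (k * (2 * (t - a))) t := by
    simpa using ((((hasDerivAt_id t).sub_const a).pow 2).const_mul k).const_add
      (coshTwoR (x a) (y a))
  refine image_le_of_deriv_right_le_deriv_boundary h.continuousOn_coshTwoR
    (fun _ ↦ h.hasDerivWithinAt_coshTwoR)
    (B := fun t ↦ coshTwoR (x a) (y a) + k * (t - a) ^ 2) (by simp) (by fun_prop)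
    (fun t _ ↦ (hasDerivAt_parabola t).hasDerivWithinAt) (fun t ht ↦ ?_)
    (Set.right_mem_Icc.mpr hab)
  have ht' := Set.Ico_subset_Icc_self ht
  have hω : 0 ≤ ω := (h.control_nonneg t ht).trans (h.control_le t ht)
  calc ε t * y t ≤ ω * y t := mul_le_mul_of_nonneg_right (h.control_le t ht) (hy t ht')
    _ ≤ ω * (ω * (coshTwoR (x a) (y a) + x a) * (t - a)) :=
        mul_le_mul_of_nonneg_left (h.snd_le_of_nonneg hya hy ht') hω
    _ = k * (2 * (t - a)) := by rw [hk]; ring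

lemma coshTwoR_le_of_nonneg (h : IsSqueezingTrajectory ω ε x y a b) (hab : a ≤ b) (hya : y a ≤ 0)
    (hy : ∀ t ∈ Set.Icc a b, 0 ≤ y t) :
    coshTwoR (x b) (y b) ≤ coshTwoR (x a) (y a) * (1 + ω ^ 2 * (b - a) ^ 2) :=
  calc coshTwoR (x b) (y b)
      ≤ coshTwoR (x a) (y a) + ω ^ 2 * (coshTwoR (x a) (y a) + x a) / 2 * (b - a) ^ 2 :=
        h.coshTwoR_le_add_sq hab hya hy
    _ ≤ coshTwoR (x a) (y a) +
          ω ^ 2 * (coshTwoR (x a) (y a) + coshTwoR (x a) (y a)) / 2 * (b - a) ^ 2 := by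
        gcongr
        exact le_coshTwoR _ _
    _ = coshTwoR (x a) (y a) * (1 + ω ^ 2 * (b - a) ^ 2) := by ring

lemma coshTwoR_le_mul_prod {m : ℕ} {s : ℕ → ℝ}
    (h : IsSqueezingTrajectory ω ε x y (s 0) (s (2 * m))) (hy0 : y (s 0) ≤ 0)
    (hs : MonotoneOn s (Set.Iic (2 * m)))
    (hupper : ∀ i < m, ∀ t ∈ Set.Icc (s (2 * i)) (s (2 * i + 1)), 0 ≤ y t)
    (hlower : ∀ i < m, ∀ t ∈ Set.Icc (s (2 * i + 1)) (s (2 * i + 2)), y t ≤ 0) :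
    coshTwoR (x (s (2 * m))) (y (s (2 * m))) ≤ coshTwoR (x (s 0)) (y (s 0)) *
      ∏ i ∈ range m, (1 + ω ^ 2 * (s (2 * i + 1) - s (2 * i)) ^ 2) := by
  have mono {j k : ℕ} (hjk : j ≤ k) (hk : k ≤ 2 * m) : s j ≤ s k := hs (hjk.trans hk) hk hjk
  have traj {j k : ℕ} (hj : j ≤ 2 * m) (hk : k ≤ 2 * m) :
      IsSqueezingTrajectory ω ε x y (s j) (s k) :=
    h.mono (mono j.zero_le hj) (mono hk le_rfl)
  have y_start_nonpos : ∀ i < m, y (s (2 * i)) ≤ 0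
    | 0, _ => hy0
    | i + 1, hi => hlower i (by lia) _ (Set.right_mem_Icc.mpr (mono (by lia) (by lia)))
  refine le_mul_prod_of_succ_le_mul (z := fun i ↦ coshTwoR (x (s (2 * i))) (y (s (2 * i))))
    (fun i _ ↦ by positivity) fun i hi ↦ ?_
  calc coshTwoR (x (s (2 * i + 2))) (y (s (2 * i + 2)))
      ≤ coshTwoR (x (s (2 * i + 1))) (y (s (2 * i + 1))) :=
        (traj (by lia) (by lia)).coshTwoR_le_of_nonpos (mono (by lia) (by lia)) (hlower i hi)
    _ ≤ coshTwoR (x (s (2 * i))) (y (s (2 * i))) *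
          (1 + ω ^ 2 * (s (2 * i + 1) - s (2 * i)) ^ 2) :=
        (traj (by lia) (by lia)).coshTwoR_le_of_nonneg (mono (by lia) (by lia))
          (y_start_nonpos i hi) (hupper i hi)

end IsSqueezingTrajectory

theorem squeezing_bound_fixed_winding_general {ω : ℝ} {ε x y : ℝ → ℝ} {n m : ℕ} {s : ℕ → ℝ}
    (h : IsSqueezingTrajectory ω ε x y (s 0) (s (2 * m))) (hy0 : y (s 0) ≤ 0) (hm : m ≤ n + 1)
    (hs : ∀ i < 2 * m, s i ≤ s (i + 1))
    (hupper : ∀ i < m, ∀ t ∈ Set.Icc (s (2 * i)) (s (2 * i + 1)), 0 ≤ y t)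
    (hlower : ∀ i < m, ∀ t ∈ Set.Icc (s (2 * i + 1)) (s (2 * i + 2)), y t ≤ 0) :
    coshTwoR (x (s (2 * m))) (y (s (2 * m))) ≤ coshTwoR (x (s 0)) (y (s 0)) *
      (ω ^ 2 * (s (2 * m) - s 0) ^ 2 / (n + 1) + 1) ^ (n + 1) := by
  have s_mono : MonotoneOn s (Set.Iic (2 * m)) :=
    monotoneOn_of_le_add_one Set.ordConnected_Iic fun i _ _ hi ↦ hs i hi
  set τ : ℕ → ℝ := fun i ↦ s (2 * i + 1) - s (2 * i)
  have prod_le : ∏ i ∈ range m, (1 + ω ^ 2 * τ i ^ 2) ≤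
      (ω ^ 2 * (s (2 * m) - s 0) ^ 2 / (n + 1) + 1) ^ (n + 1) :=
    calc ∏ i ∈ range m, (1 + ω ^ 2 * τ i ^ 2)
        ≤ ((∑ i ∈ range m, ω ^ 2 * τ i ^ 2) / (n + 1 : ℕ) + 1) ^ (n + 1) :=
          prod_one_add_le_pow_of_card_le (fun i _ ↦ by positivity) (by rwa [card_range])
      _ ≤ (ω ^ 2 * (s (2 * m) - s 0) ^ 2 / (n + 1) + 1) ^ (n + 1) := by
          rw [← mul_sum, Nat.cast_succ]
          gcongr
          exact sum_sq_even_gaps_le s_mono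
  exact (h.coshTwoR_le_mul_prod hy0 s_mono hupper hlower).trans
    (mul_le_mul_of_nonneg_left prod_le (coshTwoR_pos _ _).le)

/-- Theorem 1, ODE form: for the phase-space ODE system with admissible
control, starting at the origin, if the trajectory makes at most `n+1` excursions into the
upper half-plane up to time `T` (winding number at most `n`), then
`√(1 + x(T)² + y(T)²) ≤ (ω²T²/(n+1) + 1)^{n+1}`. -/
theorem squeezing_bound_fixed_winding
    (ω : ℝ) (hω : 0 < ω) (ε x y : ℝ → ℝ) (hε : Continuous ε)
    (hadm : ∀ t, 0 ≤ ε t ∧ ε t ≤ ω)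
    (hx : ∀ t, HasDerivAt x (-(2 * ω - ε t) * y t) t)
    (hy : ∀ t, HasDerivAt y ((2 * ω - ε t) * x t
      + ε t * Real.sqrt (1 + (x t) ^ 2 + (y t) ^ 2)) t)
    (hx0 : x 0 = 0) (hy0 : y 0 = 0)
    (T : ℝ) (hT : 0 ≤ T) (n : ℕ)
    (m : ℕ) (hm : m ≤ n + 1) (s : ℕ → ℝ)
    (hs0 : s 0 = 0) (hsT : s (2 * m) = T)
    (hmono : ∀ i < 2 * m, s i ≤ s (i + 1))
    (hupper : ∀ i < m, ∀ t ∈ Set.Icc (s (2 * i)) (s (2 * i + 1)), 0 ≤ y t)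
    (hlower : ∀ i < m, ∀ t ∈ Set.Icc (s (2 * i + 1)) (s (2 * i + 2)), y t ≤ 0) :
    Real.sqrt (1 + (x T) ^ 2 + (y T) ^ 2)
      ≤ (ω ^ 2 * T ^ 2 / (n + 1) + 1) ^ (n + 1) := by
  subst hsT
  simpa [coshTwoR, hs0, hx0, hy0] using squeezing_bound_fixed_winding_general
    (.of_hasDerivAt hadm hx hy) (by rw [hs0, hy0]) hm hmono hupper hlower
end

section
/- For the phase-space ODE system, suppose the control ε is nondecreasing; fix a time τ and define C(t) = (2ω − ε(τ))·√(1 + x(t)² + y(t)²) + ε(τ)·x(t). Then C is differentiable with C'(t) = 2ω·(ε(t) − ε(τ))·y(t) for every t; in particular, C is nonincreasing on any interval [τ, t₁] on which y(t) ≤ 0. -/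
/-!
Write `S = √(1 + x² + y²)`. The rotational part of the flow leaves `x² + y²`, hence `S`, unchanged,
and the driving term `ε S` in `y'` gives `S' = ε y`. Up to an affine change, `C` is the mean energy
of the Hamiltonian with the control frozen at the value `ε τ`. The flow with that constant control
conserves it, so `C'` is proportional to `ε - ε τ`.
-/

open Set

/-- The quantity `C` of the paper at the phase-space point `(x, y)`, with the control frozen at `c`.
In the squeezed vacuum, `⟨a†a⟩ = (√(1 + x² + y²) - 1) / 2` and
`⟨(a + a†)²⟩ = √(1 + x² + y²) - x`, so it equals `4 ⟨ω a†a - (c/4) (a + a†)²⟩ + 2 ω`. -/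
noncomputable def frozenEnergy (ω c x y : ℝ) : ℝ :=
  (2 * ω - c) * √(1 + x ^ 2 + y ^ 2) + c * x

section Trajectory

variable {ω : ℝ} {x y : ℝ → ℝ} {s : Set ℝ}

theorem hasDerivWithinAt_sqrt_one_add_sq_add_sq {e t : ℝ}
    (hx : HasDerivWithinAt x (-(2 * ω - e) * y t) s t)
    (hy : HasDerivWithinAt y ((2 * ω - e) * x t + e * √(1 + x t ^ 2 + y t ^ 2)) s t) :
    HasDerivWithinAt (fun r => √(1 + x r ^ 2 + y r ^ 2)) (e * y t) s t := by
  have hpos : 0 < 1 + x t ^ 2 + y t ^ 2 := by positivity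
  have hsq : HasDerivWithinAt (fun r => 1 + x r ^ 2 + y r ^ 2)
      (2 * √(1 + x t ^ 2 + y t ^ 2) * (e * y t)) s t :=
    (((hx.fun_pow 2).const_add 1).fun_add (hy.fun_pow 2)).congr_deriv (by norm_num; ring)
  have hS : 2 * √(1 + x t ^ 2 + y t ^ 2) ≠ 0 := by positivity
  exact (hsq.sqrt hpos.ne').congr_deriv (mul_div_cancel_left₀ _ hS)

theorem hasDerivWithinAt_frozenEnergy {e t : ℝ}
    (hx : HasDerivWithinAt x (-(2 * ω - e) * y t) s t)
    (hy : HasDerivWithinAt y ((2 * ω - e) * x t + e * √(1 + x t ^ 2 + y t ^ 2)) s t) (c : ℝ) :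
    HasDerivWithinAt (fun r => frozenEnergy ω c (x r) (y r)) (2 * ω * (e - c) * y t) s t :=
  (((hasDerivWithinAt_sqrt_one_add_sq_add_sq hx hy).const_mul (2 * ω - c)).fun_add
    (hx.const_mul c)).congr_deriv (by ring)

theorem antitoneOn_frozenEnergy {ε : ℝ → ℝ} {c : ℝ} (hω : 0 ≤ ω) (hs : Convex ℝ s)
    (hx : ∀ t ∈ s, HasDerivWithinAt x (-(2 * ω - ε t) * y t) s t)
    (hy : ∀ t ∈ s,
      HasDerivWithinAt y ((2 * ω - ε t) * x t + ε t * √(1 + x t ^ 2 + y t ^ 2)) s t)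
    (hc : ∀ t ∈ s, c ≤ ε t) (hy₀ : ∀ t ∈ s, y t ≤ 0) :
    AntitoneOn (fun t => frozenEnergy ω c (x t) (y t)) s := by
  have hC : ∀ t ∈ s, HasDerivWithinAt (fun r => frozenEnergy ω c (x r) (y r))
      (2 * ω * (ε t - c) * y t) s t :=
    fun t ht => hasDerivWithinAt_frozenEnergy (hx t ht) (hy t ht) c
  refine antitoneOn_of_hasDerivWithinAt_nonpos hs (fun t ht => (hC t ht).continuousWithinAt)
    (fun t ht => (hC t (interior_subset ht)).mono interior_subset) fun t ht => ?_
  have hεc : 0 ≤ ε t - c := sub_nonneg.mpr (hc t (interior_subset ht))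
  exact mul_nonpos_of_nonneg_of_nonpos (by positivity) (hy₀ t (interior_subset ht))

theorem C_derivative_and_monotone_general {ε : ℝ → ℝ} (hω : 0 ≤ ω)
    (hx : ∀ t ∈ s, HasDerivWithinAt x (-(2 * ω - ε t) * y t) s t)
    (hy : ∀ t ∈ s,
      HasDerivWithinAt y ((2 * ω - ε t) * x t + ε t * √(1 + x t ^ 2 + y t ^ 2)) s t)
    (c : ℝ) :
    (∀ t ∈ s, HasDerivWithinAt (fun r => frozenEnergy ω c (x r) (y r))
      (2 * ω * (ε t - c) * y t) s t) ∧
    ∀ u ⊆ s, Convex ℝ u → (∀ t ∈ u, c ≤ ε t) → (∀ t ∈ u, y t ≤ 0) →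
      AntitoneOn (fun t => frozenEnergy ω c (x t) (y t)) u :=
  ⟨fun t ht => hasDerivWithinAt_frozenEnergy (hx t ht) (hy t ht) c, fun _ hus hu =>
    antitoneOn_frozenEnergy hω hu (fun t ht => (hx t (hus ht)).mono hus)
      fun t ht => (hy t (hus ht)).mono hus⟩

end Trajectory

/-- for the phase-space ODE system with nondecreasing control `ε`, fixing a
time `τ` and setting `C(t) = (2ω − ε(τ))·√(1 + x(t)² + y(t)²) + ε(τ)·x(t)`, the function
`C` is differentiable with `C'(t) = 2ω·(ε(t) − ε(τ))·y(t)`; in particular `C` is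
nonincreasing on any interval `[τ, t₁]` on which `y ≤ 0`. -/
theorem C_derivative_and_monotone
    (ω : ℝ) (hω : 0 < ω) (ε x y : ℝ → ℝ) (hε : Continuous ε)
    (hmono : Monotone ε)
    (hx : ∀ t, HasDerivAt x (-(2 * ω - ε t) * y t) t)
    (hy : ∀ t, HasDerivAt y ((2 * ω - ε t) * x t
      + ε t * Real.sqrt (1 + (x t) ^ 2 + (y t) ^ 2)) t)
    (τ : ℝ) :
    (∀ t, HasDerivAt
        (fun s => (2 * ω - ε τ) * Real.sqrt (1 + (x s) ^ 2 + (y s) ^ 2) + ε τ * x s)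
        (2 * ω * (ε t - ε τ) * y t) t)
    ∧ (∀ t₁, τ ≤ t₁ → (∀ t ∈ Set.Icc τ t₁, y t ≤ 0) →
        AntitoneOn
          (fun s => (2 * ω - ε τ) * Real.sqrt (1 + (x s) ^ 2 + (y s) ^ 2) + ε τ * x s)
          (Set.Icc τ t₁)) := by
  obtain ⟨hderiv, hanti⟩ := C_derivative_and_monotone_general (s := univ) hω.le
    (fun t _ => (hx t).hasDerivWithinAt) (fun t _ => (hy t).hasDerivWithinAt) (ε τ)
  exact ⟨fun t => (hderiv t (mem_univ t)).hasDerivAt Filter.univ_mem, fun t₁ _ =>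
    hanti (Icc τ t₁) (subset_univ _) (convex_Icc τ t₁) fun _ ht => hmono ht.1⟩
end

section
/- (Theorem 4, ODE form: saturation of squeezing away from criticality at fixed winding number.) For the phase-space ODE system with 0 ≤ ε(t) ≤ ε_max for all t, where ε_max < ω, suppose x(0) = y(0) = 0 and let T ≥ 0, n ∈ ℕ. Suppose there is a partition 0 = s₀ ≤ s₁ ≤ … ≤ s_{2m} = T with m ≤ n + 1 such that for each i, y(t) ≥ 0 for all t ∈ [s_{2i}, s_{2i+1}] and y(t) ≤ 0 for all t ∈ [s_{2i+1}, s_{2i+2}] (at most n+1 excursions into the upper half-plane, i.e., winding number at most n). Then √(1 + x(T)² + y(T)²) ≤ (ω/(ω − ε_max))^{n+1}; in particular sinh(2r(T)) ≤ (1/(1 − ε_max/ω))^{n+1}, regardless of the total evolution time T. -/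
/-!
The squeezing `C = cosh (2r)` satisfies `C' = ε y`, so it can only grow in the upper half-plane.
There it is controlled by the energy `(2ω - c) C + c x` of the Hamiltonian with constant maximal
control `c`, whose derivative `2ω (ε - c) y` is nonpositive for `ε ≤ c`. Since `|x| ≤ C`, this
energy lies between `2 (ω - c) C` and `2 ω C`, so one excursion multiplies `C` by at most
`ω / (ω - c)`, however long it lasts.
-/

/-- The equations of motion of the squeezed vacuum under `H(t) = ω a†a - (ε(t)/4) (a + a†)²`, in the
phase-space coordinates `x = sinh (2r) cos φ`, `y = sinh (2r) sin φ`, during the times in `I`.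
Derivatives are taken within `I`, so they are one-sided at the endpoints of an interval. -/
structure IsSqueezingTrajectoryOn (ω : ℝ) (ε x y : ℝ → ℝ) (I : Set ℝ) : Prop where
  hasDerivWithinAt_fst : ∀ t ∈ I, HasDerivWithinAt x (-(2 * ω - ε t) * y t) I t
  hasDerivWithinAt_snd : ∀ t ∈ I,
    HasDerivWithinAt y ((2 * ω - ε t) * x t + ε t * √(1 + x t ^ 2 + y t ^ 2)) I t

/-- The squeezing `cosh (2r)` in the phase-space coordinates `x = sinh (2r) cos φ`,
`y = sinh (2r) sin φ`. -/
noncomputable def squeezingCosh (x y : ℝ → ℝ) (t : ℝ) : ℝ :=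
  √(1 + x t ^ 2 + y t ^ 2)

/-- The energy of the squeezed vacuum under the Hamiltonian with constant control `c`, normalized as
`4⟨H⟩ + 2ω`. It is the Lyapunov function for excursions into the upper half-plane. -/
noncomputable def squeezingEnergy (ω c : ℝ) (x y : ℝ → ℝ) (t : ℝ) : ℝ :=
  (2 * ω - c) * squeezingCosh x y t + c * x t

section Bounds

variable (x y : ℝ → ℝ) (t : ℝ)

theorem squeezingCosh_pos : 0 < squeezingCosh x y t :=
  Real.sqrt_pos.2 (by positivity)

theorem abs_le_squeezingCosh : |x t| ≤ squeezingCosh x y t :=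
  Real.abs_le_sqrt (by linarith [sq_nonneg (y t)])

variable (ω : ℝ) {c : ℝ}

theorem squeezingEnergy_le (hc : 0 ≤ c) :
    squeezingEnergy ω c x y t ≤ 2 * ω * squeezingCosh x y t := by
  have hx := mul_le_mul_of_nonneg_left (le_of_abs_le (abs_le_squeezingCosh x y t)) hc
  unfold squeezingEnergy
  linarith

theorem le_squeezingEnergy (hc : 0 ≤ c) :
    2 * (ω - c) * squeezingCosh x y t ≤ squeezingEnergy ω c x y t := by
  have hx := mul_le_mul_of_nonneg_left (neg_le_of_abs_le (abs_le_squeezingCosh x y t)) hc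
  unfold squeezingEnergy
  linarith

end Bounds

namespace IsSqueezingTrajectoryOn

variable {ω c : ℝ} {ε x y : ℝ → ℝ} {I J : Set ℝ} {a b d t : ℝ}

theorem mono (h : IsSqueezingTrajectoryOn ω ε x y I) (hJ : J ⊆ I) :
    IsSqueezingTrajectoryOn ω ε x y J where
  hasDerivWithinAt_fst t ht := (h.hasDerivWithinAt_fst t (hJ ht)).mono hJ
  hasDerivWithinAt_snd t ht := (h.hasDerivWithinAt_snd t (hJ ht)).mono hJ

theorem hasDerivWithinAt_squeezingCosh (h : IsSqueezingTrajectoryOn ω ε x y I) (ht : t ∈ I) :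
    HasDerivWithinAt (squeezingCosh x y) (ε t * y t) I t := by
  have hsq := (((h.hasDerivWithinAt_fst t ht).fun_pow 2).const_add 1).fun_add
    ((h.hasDerivWithinAt_snd t ht).fun_pow 2)
  refine (hsq.sqrt (by positivity)).congr_deriv ?_
  field_simp
  ring

theorem hasDerivWithinAt_squeezingEnergy (h : IsSqueezingTrajectoryOn ω ε x y I) (ht : t ∈ I) :
    HasDerivWithinAt (squeezingEnergy ω c x y) (2 * ω * (ε t - c) * y t) I t :=
  (((h.hasDerivWithinAt_squeezingCosh ht).const_mul (2 * ω - c)).add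
    ((h.hasDerivWithinAt_fst t ht).const_mul c)).congr_deriv (by ring)

theorem antitoneOn_squeezingCosh (h : IsSqueezingTrajectoryOn ω ε x y I) (hI : I.OrdConnected)
    (hε : ∀ t ∈ I, 0 ≤ ε t) (hy : ∀ t ∈ I, y t ≤ 0) : AntitoneOn (squeezingCosh x y) I :=
  antitoneOn_of_hasDerivWithinAt_nonpos hI.convex
    (fun _ ht ↦ (h.hasDerivWithinAt_squeezingCosh ht).continuousWithinAt)
    (fun _ ht ↦ (h.mono interior_subset).hasDerivWithinAt_squeezingCosh ht)
    (fun t ht ↦ mul_nonpos_of_nonneg_of_nonpos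
      (hε t (interior_subset ht)) (hy t (interior_subset ht)))

theorem antitoneOn_squeezingEnergy (h : IsSqueezingTrajectoryOn ω ε x y I) (hI : I.OrdConnected)
    (hω : 0 ≤ ω) (hε : ∀ t ∈ I, ε t ≤ c) (hy : ∀ t ∈ I, 0 ≤ y t) :
    AntitoneOn (squeezingEnergy ω c x y) I :=
  antitoneOn_of_hasDerivWithinAt_nonpos hI.convex
    (fun _ ht ↦ (h.hasDerivWithinAt_squeezingEnergy ht).continuousWithinAt)
    (fun _ ht ↦ (h.mono interior_subset).hasDerivWithinAt_squeezingEnergy ht)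
    (fun t ht ↦ mul_nonpos_of_nonpos_of_nonneg
      (mul_nonpos_of_nonneg_of_nonpos (by positivity) (sub_nonpos.2 (hε t (interior_subset ht))))
      (hy t (interior_subset ht)))

theorem squeezingCosh_le_div_mul_of_nonneg (h : IsSqueezingTrajectoryOn ω ε x y (Set.Icc a b))
    (hab : a ≤ b) (hc : 0 ≤ c) (hcω : c < ω) (hε : ∀ t ∈ Set.Icc a b, ε t ≤ c)
    (hy : ∀ t ∈ Set.Icc a b, 0 ≤ y t) :
    squeezingCosh x y b ≤ ω / (ω - c) * squeezingCosh x y a := by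
  have henergy : 2 * (ω - c) * squeezingCosh x y b ≤ 2 * ω * squeezingCosh x y a :=
    calc
      2 * (ω - c) * squeezingCosh x y b ≤ squeezingEnergy ω c x y b := le_squeezingEnergy x y b ω hc
      _ ≤ squeezingEnergy ω c x y a :=
        h.antitoneOn_squeezingEnergy Set.ordConnected_Icc (hc.trans hcω.le) hε hy
          (Set.left_mem_Icc.2 hab) (Set.right_mem_Icc.2 hab) hab
      _ ≤ 2 * ω * squeezingCosh x y a := squeezingEnergy_le x y a ω hc
  rw [div_mul_eq_mul_div, le_div_iff₀ (sub_pos.2 hcω)]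
  linarith

theorem squeezingCosh_le_div_mul_of_excursion (h : IsSqueezingTrajectoryOn ω ε x y (Set.Icc a d))
    (hab : a ≤ b) (hbd : b ≤ d) (hcω : c < ω) (hε : ∀ t ∈ Set.Icc a d, 0 ≤ ε t ∧ ε t ≤ c)
    (hupper : ∀ t ∈ Set.Icc a b, 0 ≤ y t) (hlower : ∀ t ∈ Set.Icc b d, y t ≤ 0) :
    squeezingCosh x y d ≤ ω / (ω - c) * squeezingCosh x y a := by
  have hleft : Set.Icc a b ⊆ Set.Icc a d := Set.Icc_subset_Icc_right hbd
  have hright : Set.Icc b d ⊆ Set.Icc a d := Set.Icc_subset_Icc_left hab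
  have hεa := hε a (Set.left_mem_Icc.2 (hab.trans hbd))
  calc
    squeezingCosh x y d ≤ squeezingCosh x y b :=
      (h.mono hright).antitoneOn_squeezingCosh Set.ordConnected_Icc
        (fun t ht ↦ (hε t (hright ht)).1) hlower
        (Set.left_mem_Icc.2 hbd) (Set.right_mem_Icc.2 hbd) hbd
    _ ≤ ω / (ω - c) * squeezingCosh x y a :=
      (h.mono hleft).squeezingCosh_le_div_mul_of_nonneg hab (hεa.1.trans hεa.2) hcω
        (fun t ht ↦ (hε t (hleft ht)).2) hupper

end IsSqueezingTrajectoryOn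

theorem squeezing_saturation_subcritical_general {ω c : ℝ} {ε x y : ℝ → ℝ} {I : Set ℝ}
    (h : IsSqueezingTrajectoryOn ω ε x y I) (hI : I.OrdConnected) (hcω : c < ω)
    (hε : ∀ t ∈ I, 0 ≤ ε t ∧ ε t ≤ c) {m n : ℕ} (hmn : m ≤ n) {s : ℕ → ℝ}
    (hs : ∀ i ≤ 2 * m, s i ∈ I) (hmono : ∀ i < 2 * m, s i ≤ s (i + 1))
    (hupper : ∀ i < m, ∀ t ∈ Set.Icc (s (2 * i)) (s (2 * i + 1)), 0 ≤ y t)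
    (hlower : ∀ i < m, ∀ t ∈ Set.Icc (s (2 * i + 1)) (s (2 * i + 2)), y t ≤ 0) :
    √(1 + x (s (2 * m)) ^ 2 + y (s (2 * m)) ^ 2) ≤
      (ω / (ω - c)) ^ n * √(1 + x (s 0) ^ 2 + y (s 0) ^ 2) := by
  have hε₀ := hε (s 0) (hs 0 (Nat.zero_le _))
  have hratio : 1 ≤ ω / (ω - c) :=
    (one_le_div (sub_pos.2 hcω)).2 (sub_le_self ω (hε₀.1.trans hε₀.2))
  have hexcursion : ∀ i < m,
      squeezingCosh x y (s (2 * (i + 1))) ≤ ω / (ω - c) * squeezingCosh x y (s (2 * i)) := by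
    intro i hi
    have hsub : Set.Icc (s (2 * i)) (s (2 * i + 2)) ⊆ I :=
      hI.out (hs _ (by lia)) (hs _ (by lia))
    exact (h.mono hsub).squeezingCosh_le_div_mul_of_excursion
      (hmono _ (by lia)) (hmono _ (by lia)) hcω (fun t ht ↦ hε t (hsub ht)) (hupper i hi)
      (hlower i hi)
  calc
    squeezingCosh x y (s (2 * m)) ≤ (ω / (ω - c)) ^ m * squeezingCosh x y (s 0) :=
      le_geom (u := fun i ↦ squeezingCosh x y (s (2 * i))) (zero_le_one.trans hratio) m hexcursion
    _ ≤ (ω / (ω - c)) ^ n * squeezingCosh x y (s 0) := by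
      gcongr
      exact (squeezingCosh_pos x y _).le

/-- Theorem 4, ODE form: for the phase-space ODE system with
`0 ≤ ε(t) ≤ ε_max < ω`, starting at the origin, if the trajectory makes at most `n+1`
excursions into the upper half-plane up to time `T` (winding number at most `n`), then
`√(1 + x(T)² + y(T)²) ≤ (ω/(ω − ε_max))^{n+1}`, regardless of `T`. -/
theorem squeezing_saturation_subcritical
    (ω : ℝ) (hω : 0 < ω) (ε x y : ℝ → ℝ) (hε : Continuous ε)
    (εmax : ℝ) (hεmax : εmax < ω) (hbd : ∀ t, 0 ≤ ε t ∧ ε t ≤ εmax)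
    (hx : ∀ t, HasDerivAt x (-(2 * ω - ε t) * y t) t)
    (hy : ∀ t, HasDerivAt y ((2 * ω - ε t) * x t
      + ε t * Real.sqrt (1 + (x t) ^ 2 + (y t) ^ 2)) t)
    (hx0 : x 0 = 0) (hy0 : y 0 = 0)
    (T : ℝ) (hT : 0 ≤ T) (n : ℕ)
    (m : ℕ) (hm : m ≤ n + 1) (s : ℕ → ℝ)
    (hs0 : s 0 = 0) (hsT : s (2 * m) = T)
    (hmono : ∀ i < 2 * m, s i ≤ s (i + 1))
    (hupper : ∀ i < m, ∀ t ∈ Set.Icc (s (2 * i)) (s (2 * i + 1)), 0 ≤ y t)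
    (hlower : ∀ i < m, ∀ t ∈ Set.Icc (s (2 * i + 1)) (s (2 * i + 2)), y t ≤ 0) :
    Real.sqrt (1 + (x T) ^ 2 + (y T) ^ 2) ≤ (ω / (ω - εmax)) ^ (n + 1) := by
  simpa [hsT, hs0, hx0, hy0] using squeezing_saturation_subcritical_general (I := Set.univ)
    ⟨fun t _ ↦ (hx t).hasDerivWithinAt, fun t _ ↦ (hy t).hasDerivWithinAt⟩ Set.ordConnected_univ
    hεmax (fun t _ ↦ hbd t) hm (fun _ _ ↦ Set.mem_univ _) hmono hupper hlower
end
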